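/- Let R be a ring, let M and N be right R-modules that are invariant under automorphisms of their pure-injective envelopes, and let f : M → N and g : N → M be pure monomorphisms. Then M ≅ N. -/

import Mathlib

/-!
Corollary 3.2: Schröder–Bernstein for pure-automorphism-invariant modules.
"Right R-modules" are formalized as Lean `Module R` modules (the theory is
side-symmetric).
-/

universe u

variable (R : Type u) [Ring R]

/-- `f : A → B` is a pure monomorphism. We use the standard equational criterion
(solvability of finite linear systems descends from `B` to `A`), which for arbitrary
(possibly noncommutative) rings is equivalent to injectivity of `f ⊗ 1_C` for all
modules `C` on the other side. -/
def IsPureMono {A B : Type u} [AddCommGroup A] [Module R A] [AddCommGroup B] [Module R B]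
    (f : A →ₗ[R] B) : Prop :=
  Function.Injective f ∧
    ∀ (m n : ℕ) (r : Fin m → Fin n → R) (a : Fin m → A),
      (∃ y : Fin n → B, ∀ i, ∑ j, r i j • y j = f (a i)) →
      ∃ x : Fin n → A, ∀ i, ∑ j, r i j • x j = a i

/-- `E` is pure-injective: for every pure monomorphism `i : A → B`, every homomorphism
`A → E` extends to a homomorphism `B → E`. -/
def IsPureInjective (E : Type u) [AddCommGroup E] [Module R E] : Prop :=
  ∀ (A B : Type u) [AddCommGroup A] [Module R A] [AddCommGroup B] [Module R B]
    (i : A →ₗ[R] B), IsPureMono R i → ∀ f : A →ₗ[R] E, ∃ g : B →ₗ[R] E, g ∘ₗ i = f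

/-- `u : M → P` is a pure-injective envelope of `M`: `u` is a pure monomorphism into a
pure-injective module `P`, every homomorphism from `M` to a pure-injective module factors
through `u`, and every endomorphism `h` of `P` with `h ∘ u = u` is an automorphism. -/
def IsPureInjectiveEnvelope (M P : Type u) [AddCommGroup M] [Module R M]
    [AddCommGroup P] [Module R P] (u : M →ₗ[R] P) : Prop :=
  IsPureMono R u ∧ IsPureInjective R P ∧
    (∀ (Q : Type u) [AddCommGroup Q] [Module R Q], IsPureInjective R Q →
      ∀ f : M →ₗ[R] Q, ∃ g : P →ₗ[R] Q, g ∘ₗ u = f) ∧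
    (∀ h : P →ₗ[R] P, h ∘ₗ u = u → Function.Bijective h)

/-- `M` is invariant under automorphisms of its pure-injective envelope
(pure-automorphism-invariant): for a pure-injective envelope `u : M → P` and every
automorphism `φ` of `P`, there is an endomorphism `f` of `M` with `u ∘ f = φ ∘ u`. -/
def IsPureAutomorphismInvariant (M : Type u) [AddCommGroup M] [Module R M] : Prop :=
  ∃ (P : Type u) (_ : AddCommGroup P) (_ : Module R P) (u : M →ₗ[R] P),
    IsPureInjectiveEnvelope R M P u ∧
    ∀ φ : P ≃ₗ[R] P, ∃ f : M →ₗ[R] M, u ∘ₗ f = (φ : P →ₗ[R] P) ∘ₗ u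

/-!
The Bumby argument for injective modules carries over once hulls are available inside a
pure-injective module `Q`. Limits along filters of families in `Q` exist because the constant
families form a pure submodule of a reduced power, so the constant map splits. By Zorn's lemma every
submodule `W` then has a hull `e Q`, where `e` is idempotent and unique up to conjugation.

Suppose that `t * s = 1`, and let `γ` be idempotent with `γ * s = s` and `t * γ = t`. If `e` is a
hull of `W = ∑ sⁿ (1 - γ) Q`, then so is `1 - γ + s * e * t`, because `W = (1 - γ) Q + s W`. A unit
`u` conjugating the former into the latter gives the Schröder–Bernstein property for the
pure-injective envelopes, and for `γ = s * t` it allows `s` to be replaced by the automorphism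
`θ = s * (1 - e) + u * e`.

For `θ` to carry `M` into `N`, the subring of endomorphisms preserving an automorphism-invariant
submodule must contain all of `e End(Q) e`. It contains the radical and the elements `x` of square
zero, because `1 + x` is invertible for these. Modulo the radical, the splitting of
`W = ∑ sⁿ (1 - s * t) Q` into its even and odd layers makes `e End(Q) e` a ring of `2 × 2` matrices,
which is generated by elements of square zero.
-/

section Ring

variable {A : Type*} [Ring A] {s t γ e f : A}

lemma mem_ringJacobson_iff {x : A} : x ∈ Ring.jacobson A ↔ ∀ y, ∃ z, z * (1 + y * x) = 1 := by
  rw [← Ideal.jacobson_bot, Ideal.mem_jacobson_iff]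
  refine forall_congr' fun y => exists_congr fun z => ?_
  rw [Ideal.mem_bot, sub_eq_zero, mul_add, mul_one, add_comm, mul_assoc]

lemma isUnit_one_add_of_mem_ringJacobson {x : A} (hx : x ∈ Ring.jacobson A) :
    IsUnit (1 + x) := by
  obtain ⟨z, hz⟩ : ∃ z, z * (1 + x) = 1 := by simpa using mem_ringJacobson_iff.1 hx 1
  obtain ⟨z', hz'⟩ := mem_ringJacobson_iff.1 hx (-z)
  have hz_eq : 1 + -z * x = z := by linear_combination (norm := noncomm_ring) -hz
  rw [hz_eq] at hz'
  obtain rfl : z' = 1 + x := left_inv_eq_right_inv hz' hz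
  exact ⟨⟨1 + x, z, hz', hz⟩, rfl⟩

lemma isUnit_of_isUnit_mk_ringJacobson {x : A}
    (hx : IsUnit (Ideal.Quotient.mk (Ring.jacobson A) x)) : IsUnit x := by
  obtain ⟨v, hv⟩ := hx
  obtain ⟨y, hy⟩ := Ideal.Quotient.mk_surjective (v⁻¹).val
  have isUnit_of_mk_eq_one {z : A} (hz : Ideal.Quotient.mk (Ring.jacobson A) z = 1) :
      IsUnit z := by
    rw [← map_one (Ideal.Quotient.mk _), Ideal.Quotient.eq] at hz
    simpa using isUnit_one_add_of_mem_ringJacobson hz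
  have hxy : IsUnit (x * y) := isUnit_of_mk_eq_one (by rw [map_mul, hy, ← hv, v.mul_inv])
  have hyx : IsUnit (y * x) := isUnit_of_mk_eq_one (by rw [map_mul, hy, ← hv, v.inv_mul])
  exact isUnit_iff_exists_and_exists.2 ⟨
    ⟨y * ↑hxy.unit⁻¹, by rw [← mul_assoc, hxy.mul_val_inv]⟩,
    ⟨↑hyx.unit⁻¹ * y, by rw [mul_assoc, hyx.val_inv_mul]⟩⟩

-- The hypotheses say that `e` and `f` generate the same right ideal modulo the radical; then
-- `e - f` squares to zero there, and `f * e + (1 - f) * (1 - e)` reduces to `1 + (e - f)`.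
lemma exists_semiconjBy_of_mul_mem_ringJacobson (he : IsIdempotentElem e)
    (hf : IsIdempotentElem f) (hfe : (1 - f) * e ∈ Ring.jacobson A)
    (hef : (1 - e) * f ∈ Ring.jacobson A) : ∃ u : Aˣ, SemiconjBy (u : A) e f := by
  let mk := Ideal.Quotient.mk (Ring.jacobson A)
  have mk_fe : mk f * mk e = mk e := by
    rw [← Ideal.Quotient.eq_zero_iff_mem, sub_mul, one_mul, map_sub, map_mul] at hfe
    exact (sub_eq_zero.1 hfe).symm
  have mk_ef : mk e * mk f = mk f := by
    rw [← Ideal.Quotient.eq_zero_iff_mem, sub_mul, one_mul, map_sub, map_mul] at hef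
    exact (sub_eq_zero.1 hef).symm
  have sq_zero : (mk e - mk f) ^ 2 = 0 := by
    linear_combination (norm := noncomm_ring) (he.map mk).eq + (hf.map mk).eq - mk_fe - mk_ef
  have mk_u : mk (f * e + (1 - f) * (1 - e)) = 1 + (mk e - mk f) := by
    simp only [map_add, map_sub, map_mul, map_one]
    linear_combination (norm := noncomm_ring) (2 : ℤ) • mk_fe
  have hu : IsUnit (f * e + (1 - f) * (1 - e)) :=
    isUnit_of_isUnit_mk_ringJacobson (mk_u ▸ IsNilpotent.isUnit_one_add ⟨2, sq_zero⟩)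
  refine ⟨hu.unit, ?_⟩
  rw [IsUnit.unit_spec, SemiconjBy]
  linear_combination (norm := noncomm_ring) (2 * f - 1) * he.eq - hf.eq * (2 * e - 1)

/-- The idempotent `e` is a hull for the left ideal `I`: `I` contains `1 - e` and is generated by it
modulo the Jacobson radical. When `I` consists of the endomorphisms of a module `Q` vanishing on a
submodule `W`, this makes `e Q` a minimal direct summand of `Q` containing `W`. -/
structure IsHullIdempotent (I : Ideal A) (e : A) : Prop where
  isIdempotentElem : IsIdempotentElem e
  one_sub_mem : 1 - e ∈ I
  mul_mem_ringJacobson : ∀ x ∈ I, x * e ∈ Ring.jacobson A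

lemma exists_mul_mul_eq_of_minimalFor_span {I : Ideal A} {h a : A}
    (hh : MinimalFor (fun k => 1 - k ∈ I) (fun k => Ideal.span {k}) h) (ha : 1 - a * h ∈ I) :
    ∃ l, l * (a * h) = h :=
  have span_le : Ideal.span {a * h} ≤ Ideal.span {h} :=
    (Ideal.span_singleton_le_iff_mem _).2 (Ideal.mem_span_singleton'.2 ⟨a, rfl⟩)
  Ideal.mem_span_singleton'.1 (hh.le_of_le ha span_le (Ideal.mem_span_singleton_self h))

lemma mul_mem_ringJacobson_of_minimalFor_span {I : Ideal A} {h x : A}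
    (hh : MinimalFor (fun k => 1 - k ∈ I) (fun k => Ideal.span {k}) h) (hx : x ∈ I) :
    x * h ∈ Ring.jacobson A := by
  refine mem_ringJacobson_iff.2 fun y => ?_
  obtain ⟨l, hl⟩ : ∃ l, l * ((1 + h * y * x) * h) = h := by
    refine exists_mul_mul_eq_of_minimalFor_span hh ?_
    convert sub_mem (add_mem hh.prop (I.mul_mem_left (h * y * x) hh.prop))
      (I.mul_mem_left (h * y) hx) using 1
    noncomm_ring
  exact ⟨1 - y * x * l * h, by linear_combination (norm := noncomm_ring) -(y * x) * hl⟩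

-- Minimality of `j` gives `l` with `l * (1 - h) * j = j`, and minimality of `h` then forces
-- `h * j = 0`; as `1 - j = c * h`, this leaves `h * c * h = h * (1 - j) = h`.
lemma exists_mul_mul_eq_self_of_minimalFor_span {I : Ideal A} {h j : A}
    (hh : MinimalFor (fun k => 1 - k ∈ I) (fun k => Ideal.span {k}) h)
    (hj : MinimalFor (fun k => 1 - k ∈ Ideal.span {h}) (fun k => Ideal.span {k}) j) :
    ∃ c, h * c * h = h := by
  obtain ⟨c, hc⟩ := Ideal.mem_span_singleton'.1 hj.prop
  obtain ⟨l, hl⟩ : ∃ l, l * ((1 - h) * j) = j := by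
    refine exists_mul_mul_eq_of_minimalFor_span hj ?_
    convert add_mem (Ideal.mul_mem_left _ (1 - h) hj.prop) (Ideal.mem_span_singleton_self h) using 1
    noncomm_ring
  obtain ⟨d, hd⟩ : ∃ d, d * ((1 - l * (1 - h)) * c * h) = h := by
    refine exists_mul_mul_eq_of_minimalFor_span hh ?_
    convert I.mul_mem_left l hh.prop using 1
    linear_combination (norm := noncomm_ring) -(1 - l * (1 - h)) * hc - hl
  have hhj : h * j = 0 := by
    linear_combination (norm := noncomm_ring)
      -hd * j + d * (1 - l * (1 - h)) * hc * j - d * hl * (1 - j)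
  exact ⟨c, by linear_combination (norm := noncomm_ring) h * hc - hhj⟩

lemma exists_isHullIdempotent_of_minimalFor_span {I : Ideal A} {h j : A}
    (hh : MinimalFor (fun k => 1 - k ∈ I) (fun k => Ideal.span {k}) h)
    (hj : MinimalFor (fun k => 1 - k ∈ Ideal.span {h}) (fun k => Ideal.span {k}) j) :
    ∃ e, IsHullIdempotent I e := by
  obtain ⟨c, hc⟩ := exists_mul_mul_eq_self_of_minimalFor_span hh hj
  refine ⟨h * c, by rw [IsIdempotentElem, ← mul_assoc, hc], ?_, fun x hx => ?_⟩
  · convert I.mul_mem_left (1 - h * c) hh.prop using 1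
    linear_combination (norm := noncomm_ring) -hc
  · rw [← mul_assoc]
    exact Ideal.mul_mem_right _ _ (mul_mem_ringJacobson_of_minimalFor_span hh hx)

lemma IsHullIdempotent.exists_semiconjBy {I : Ideal A} (he : IsHullIdempotent I e)
    (hf : IsHullIdempotent I f) : ∃ u : Aˣ, SemiconjBy (u : A) e f :=
  exists_semiconjBy_of_mul_mem_ringJacobson he.isIdempotentElem hf.isIdempotentElem
    (he.mul_mem_ringJacobson _ hf.one_sub_mem) (hf.mul_mem_ringJacobson _ he.one_sub_mem)

/-- The left ideal of all elements annihilating every `s ^ n * κ`. In an endomorphism ring it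
consists of the maps vanishing on the least submodule that contains the image of `κ` and is
stable under `s`. -/
def orbitAnnihilator (s κ : A) : Ideal A where
  carrier := {x | ∀ n, x * (s ^ n * κ) = 0}
  add_mem' hx hy n := by rw [add_mul, hx, hy, add_zero]
  zero_mem' n := zero_mul _
  smul_mem' a x hx n := by rw [smul_eq_mul, mul_assoc, hx, mul_zero]

lemma mem_orbitAnnihilator_iff {κ x : A} :
    x ∈ orbitAnnihilator s κ ↔ x * κ = 0 ∧ x * s ∈ orbitAnnihilator s κ := by
  refine ⟨fun hx => ⟨by simpa using hx 0, fun n => ?_⟩, fun hx n => ?_⟩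
  · simpa only [pow_succ', mul_assoc] using hx (n + 1)
  · cases n with
    | zero => simpa using hx.1
    | succ n => simpa only [pow_succ', mul_assoc] using hx.2 n

lemma one_sub_add_mul_mul_mul (hts : t * s = 1) (hγs : γ * s = s) :
    (1 - γ + s * e * t) * s = s * e := by
  linear_combination (norm := noncomm_ring) -hγs + s * e * hts

lemma mul_one_sub_add_mul_mul (hts : t * s = 1) (htγ : t * γ = t) :
    t * (1 - γ + s * e * t) = e * t := by
  linear_combination (norm := noncomm_ring) -htγ + hts * e * t

lemma isIdempotentElem_one_sub_add_mul_mul (hts : t * s = 1) (hγs : γ * s = s)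
    (htγ : t * γ = t) (hγ : IsIdempotentElem γ) (he : IsIdempotentElem e) :
    IsIdempotentElem (1 - γ + s * e * t) := by
  have hset : s * e * t * (s * e * t) = s * e * t := by
    linear_combination (norm := noncomm_ring) s * e * hts * e * t + s * he.eq * t
  rw [IsIdempotentElem]
  linear_combination (norm := noncomm_ring) hγ.eq + hset - hγs * e * t - s * e * htγ

lemma IsHullIdempotent.one_sub_add_mul_mul (hts : t * s = 1) (hγs : γ * s = s)
    (htγ : t * γ = t) (hγ : IsIdempotentElem γ)
    (he : IsHullIdempotent (orbitAnnihilator s (1 - γ)) e) :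
    IsHullIdempotent (orbitAnnihilator s (1 - γ)) (1 - γ + s * e * t) where
  isIdempotentElem := isIdempotentElem_one_sub_add_mul_mul hts hγs htγ hγ he.isIdempotentElem
  one_sub_mem := by
    refine mem_orbitAnnihilator_iff.2 ⟨?_, ?_⟩
    · linear_combination (norm := noncomm_ring) s * e * htγ - hγ.eq
    · convert Ideal.mul_mem_left _ s he.one_sub_mem using 1
      linear_combination (norm := noncomm_ring) hγs - s * e * hts
  mul_mem_ringJacobson x hx := by
    obtain ⟨hxκ, hxs⟩ := mem_orbitAnnihilator_iff.1 hx
    convert Ideal.mul_mem_right t _ (he.mul_mem_ringJacobson _ hxs) using 1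
    linear_combination (norm := noncomm_ring) hxκ

-- `1 = f + (1 - f)` and `γ = s * e * t + (1 - f)` are orthogonal decompositions, where
-- `f = 1 - γ + s * e * t` is conjugate to `e` and hence equivalent to `s * e * t`.
lemma exists_mul_eq_and_mul_eq_one {u : Aˣ} (hts : t * s = 1) (hγs : γ * s = s)
    (htγ : t * γ = t) (hγ : IsIdempotentElem γ) (he : IsIdempotentElem e)
    (hu : SemiconjBy (u : A) e (1 - γ + s * e * t)) : ∃ a b : A, a * b = γ ∧ b * a = 1 := by
  have hf := isIdempotentElem_one_sub_add_mul_mul hts hγs htγ hγ he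
  have hfs := one_sub_add_mul_mul_mul (e := e) hts hγs
  have htf := mul_one_sub_add_mul_mul (e := e) hts htγ
  have hγ_eq : γ = s * e * t + (1 - (1 - γ + s * e * t)) := by noncomm_ring
  have hue := hu.eq
  have heu : e * (↑u⁻¹ : A) = ↑u⁻¹ * (1 - γ + s * e * t) := hu.units_inv_symm_left.eq.symm
  generalize 1 - γ + s * e * t = f at *
  refine ⟨s * e * ↑u⁻¹ + (1 - f), u * e * t + (1 - f), ?_, ?_⟩
  · linear_combination (norm := noncomm_ring) -hγ_eq + s * e * u.inv_mul * e * t +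
      s * he.eq * t + s * heu * (1 - f) - s * ↑u⁻¹ * hf.eq + (1 - f) * hue * t -
      hf.eq * u * t + hf.eq
  · linear_combination (norm := noncomm_ring) u * e * hts * e * ↑u⁻¹ + u * he.eq * ↑u⁻¹ +
      hue * ↑u⁻¹ + f * u.mul_inv - u * e * htf - u * he.eq * t -
      hfs * e * ↑u⁻¹ - s * he.eq * ↑u⁻¹ + hf.eq

lemma exists_units_val_eq_mul_one_sub_add_mul {u : Aˣ} (hts : t * s = 1)
    (he : IsIdempotentElem e) (hu : SemiconjBy (u : A) e (1 - s * t + s * e * t)) :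
    ∃ θ : Aˣ, (θ : A) = s * (1 - e) + u * e := by
  have hfs : (1 - s * t + s * e * t) * s = s * e :=
    one_sub_add_mul_mul_mul hts (by rw [mul_assoc, hts, mul_one])
  have htf : t * (1 - s * t + s * e * t) = e * t :=
    mul_one_sub_add_mul_mul hts (by rw [← mul_assoc, hts, one_mul])
  have hf : 1 - s * (1 - e) * t = 1 - s * t + s * e * t := by noncomm_ring
  have hue := hu.eq
  have heu : e * (↑u⁻¹ : A) = ↑u⁻¹ * (1 - s * t + s * e * t) := hu.units_inv_symm_left.eq.symm
  generalize 1 - s * t + s * e * t = f at *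
  refine ⟨⟨s * (1 - e) + u * e, (1 - e) * t + e * ↑u⁻¹, ?_, ?_⟩, rfl⟩
  · linear_combination (norm := noncomm_ring) s * he.eq * t - hf + u * he.eq * ↑u⁻¹ +
      hue * ↑u⁻¹ + f * u.mul_inv - u * he.eq * t - s * he.eq * ↑u⁻¹
  · linear_combination (norm := noncomm_ring) (1 - e) * hts * (1 - e) + e * u.inv_mul * e +
      2 * he.eq + (1 - e) * t * hue + (1 - e) * htf * u - he.eq * t * u + e * ↑u⁻¹ * hfs +
      e * heu * s - he.eq * ↑u⁻¹ * s

lemma mul_mul_mul_mul_eq_self_of_semiconjBy {u : Aˣ} (hts : t * s = 1) (he : IsIdempotentElem e)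
    (hu : SemiconjBy (u : A) e (1 - s * t + s * e * t)) :
    e * (t * u) * e * ↑u⁻¹ * s * e = e := by
  have htf : t * (1 - s * t + s * e * t) = e * t :=
    mul_one_sub_add_mul_mul hts (by rw [← mul_assoc, hts, one_mul])
  calc e * (t * u) * e * ↑u⁻¹ * s * e = e * t * (u * e) * ↑u⁻¹ * s * e := by noncomm_ring
    _ = e * (t * (1 - s * t + s * e * t)) * (u * ↑u⁻¹) * s * e := by rw [hu.eq]; noncomm_ring
    _ = e * e * (t * s) * e := by rw [htf, u.mul_inv]; noncomm_ring
    _ = e := by rw [hts, mul_one, he.eq, he.eq]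

lemma mem_of_mul_self_eq_zero {X : Subring A} (hX : ∀ x, IsUnit x → x ∈ X) {x : A}
    (hx : x * x = 0) : x ∈ X := by
  have hu : IsUnit (1 + x) := IsNilpotent.isUnit_one_add ⟨2, by rw [pow_two, hx]⟩
  simpa using sub_mem (hX _ hu) X.one_mem

-- `a * b` and `b * a` are the diagonal matrix units of a system with off-diagonal units
-- `a` and `b`; off-diagonal elements square to zero, and their products fill the diagonal.
lemma mul_mul_mem_of_mul_self_eq_zero {X : Subring A} (hX : ∀ x, IsUnit x → x ∈ X) {a b : A}
    (ha : a * a = 0) (hb : b * b = 0) (haba : a * b * a = a) (hbab : b * a * b = b) (z : A) :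
    (a * b + b * a) * z * (a * b + b * a) ∈ X := by
  have upper_mem (z : A) : a * b * z * (b * a) ∈ X := mem_of_mul_self_eq_zero hX (by
    linear_combination (norm := noncomm_ring) a * b * z * b * ha * b * z * b * a)
  have lower_mem (z : A) : b * a * z * (a * b) ∈ X := mem_of_mul_self_eq_zero hX (by
    linear_combination (norm := noncomm_ring) b * a * z * a * hb * a * z * a * b)
  have a_mem : a ∈ X := mem_of_mul_self_eq_zero hX ha
  have b_mem : b ∈ X := mem_of_mul_self_eq_zero hX hb
  have diag_mem : a * b * z * (a * b) + b * a * z * (b * a) ∈ X := by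
    have key : a * b * z * (a * b) + b * a * z * (b * a) =
        a * (b * a * (b * z) * (a * b)) + b * (a * b * (a * z) * (b * a)) := by
      linear_combination (norm := noncomm_ring) -haba * b * z * a * b - hbab * a * z * b * a
    exact key ▸ add_mem (mul_mem a_mem (lower_mem _)) (mul_mem b_mem (upper_mem _))
  convert add_mem diag_mem (add_mem (upper_mem z) (lower_mem z)) using 1
  noncomm_ring

lemma mem_of_mk_mem_map_ringJacobson {X : Subring A} (hX : ∀ x, IsUnit x → x ∈ X) {x : A}
    (hx : Ideal.Quotient.mk (Ring.jacobson A) x ∈ X.map (Ideal.Quotient.mk (Ring.jacobson A))) :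
    x ∈ X := by
  obtain ⟨y, hy, hyx⟩ := hx
  have hxy : x - y ∈ Ring.jacobson A := Ideal.Quotient.eq.1 hyx.symm
  have hu : IsUnit (1 + (x - y)) := isUnit_one_add_of_mem_ringJacobson hxy
  have : 1 + (x - y) - 1 + y ∈ X := add_mem (sub_mem (hX _ hu) X.one_mem) hy
  simpa using this

lemma mem_map_mk_ringJacobson_of_isUnit {X : Subring A} (hX : ∀ x, IsUnit x → x ∈ X)
    {x : A ⧸ Ring.jacobson A} (hx : IsUnit x) :
    x ∈ X.map (Ideal.Quotient.mk (Ring.jacobson A)) := by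
  obtain ⟨x, rfl⟩ := Ideal.Quotient.mk_surjective x
  exact ⟨x, hX _ (isUnit_of_isUnit_mk_ringJacobson hx), rfl⟩

lemma IsHullIdempotent.mul_mul_mem {X : Subring A} (hX : ∀ x, IsUnit x → x ∈ X) {I : Ideal A}
    {a b : A} (he : IsHullIdempotent I e) (hIa : ∀ x ∈ I, x * a ∈ I) (hIb : ∀ x ∈ I, x * b ∈ I)
    (haa : a * a ∈ I) (hbb : b * b ∈ I) (hab : 1 - (a * b + b * a) ∈ I) (z : A) :
    e * z * e ∈ X := by
  let mk := Ideal.Quotient.mk (Ring.jacobson A)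
  have mk_mul (x : A) {y : A} (hy : ∀ x ∈ I, x * y ∈ I) :
      mk (x * e) * mk (y * e) = mk (x * y * e) := by
    rw [← map_mul, eq_comm, Ideal.Quotient.eq]
    convert Ideal.mul_mem_left _ x (he.mul_mem_ringJacobson _ (hy _ he.one_sub_mem)) using 1
    noncomm_ring
  have mk_eq_zero {x : A} (hx : x ∈ I) : mk (x * e) = 0 :=
    Ideal.Quotient.eq_zero_iff_mem.2 (he.mul_mem_ringJacobson x hx)
  have mk_mul_mk_e (x : A) : mk (x * e) * mk e = mk (x * e) := by
    rw [← map_mul, mul_assoc, he.isIdempotentElem.eq]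
  have mk_aa : mk (a * e) * mk (a * e) = 0 := by rw [mk_mul a hIa, mk_eq_zero haa]
  have mk_bb : mk (b * e) * mk (b * e) = 0 := by rw [mk_mul b hIb, mk_eq_zero hbb]
  have mk_ab : mk (a * e) * mk (b * e) + mk (b * e) * mk (a * e) = mk e := by
    have := mk_eq_zero hab
    rw [mk_mul a hIb, mk_mul b hIa, ← map_add, ← sub_eq_zero, ← neg_eq_zero, ← this, ← map_sub,
      ← map_neg]
    congr 1
    noncomm_ring
  have mk_zee : mk e * mk z * mk e ∈ X.map mk := by
    rw [← mk_ab]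
    refine mul_mul_mem_of_mul_self_eq_zero (fun _ => mem_map_mk_ringJacobson_of_isUnit hX)
      mk_aa mk_bb ?_ ?_ _
    · linear_combination (norm := noncomm_ring)
        mk (a * e) * mk_ab - mk_aa * mk (b * e) + mk_mul_mk_e a
    · linear_combination (norm := noncomm_ring)
        mk (b * e) * mk_ab - mk_bb * mk (a * e) + mk_mul_mk_e b
  exact mem_of_mk_mem_map_ringJacobson hX (by simpa only [map_mul] using mk_zee)

/-- The partial sums `1 - s * t + s ^ 2 * t ^ 2 - ⋯` with `n` terms. When `t * s = 1`, they project
onto the summands `s ^ k * (1 - s * t)` with `k` even and kill those with `k` odd, for `k < n`. -/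
def altSum (s t : A) : ℕ → A
  | 0 => 0
  | n + 1 => 1 - s * altSum s t n * t

lemma altSum_mul_pow_mul (hts : t * s = 1) {n k : ℕ} (hkn : k < n) :
    altSum s t n * (s ^ k * (1 - s * t)) = if Even k then s ^ k * (1 - s * t) else 0 := by
  induction n generalizing k with
  | zero => omega
  | succ n ih =>
    cases k with
    | zero =>
      rw [altSum, if_pos Even.zero]
      linear_combination (norm := noncomm_ring) s * altSum s t n * hts * t
    | succ k =>
      have h : altSum s t (n + 1) * (s ^ (k + 1) * (1 - s * t)) =
          s * (s ^ k * (1 - s * t) - altSum s t n * (s ^ k * (1 - s * t))) := by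
        rw [altSum, pow_succ']
        linear_combination (norm := noncomm_ring) -s * altSum s t n * hts * s ^ k * (1 - s * t)
      rw [h, ih (by omega)]
      by_cases hk : Even k <;> simp [hk, Nat.even_add_one, pow_succ', mul_assoc]

-- `ε` selects the even layers `s ^ k * (1 - s * t)`. So `s * ε` moves each of them up into the next
-- odd layer, `ε * t` moves the odd layers back down, and both kill the remaining layers.
lemma IsHullIdempotent.mul_mul_mem_of_mul_pow_mul {X : Subring A} (hX : ∀ x, IsUnit x → x ∈ X)
    (hts : t * s = 1) (he : IsHullIdempotent (orbitAnnihilator s (1 - s * t)) e) {ε : A}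
    (hε : ∀ k, ε * (s ^ k * (1 - s * t)) = if Even k then s ^ k * (1 - s * t) else 0) (z : A) :
    e * z * e ∈ X := by
  have tκ_eq : t * (1 - s * t) = 0 := by linear_combination (norm := noncomm_ring) -hts * t
  have a_zero : ε * t * (s ^ 0 * (1 - s * t)) = 0 := by
    rw [pow_zero, one_mul, mul_assoc, tκ_eq, mul_zero]
  have a_succ (k) : ε * t * (s ^ (k + 1) * (1 - s * t)) =
      if Even k then s ^ k * (1 - s * t) else 0 := by
    rw [← hε, pow_succ']
    linear_combination (norm := noncomm_ring) ε * hts * s ^ k * (1 - s * t)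
  have b_eq (k) : s * ε * (s ^ k * (1 - s * t)) =
      if Even k then s ^ (k + 1) * (1 - s * t) else 0 := by
    rw [mul_assoc, hε, mul_ite, mul_zero, pow_succ', mul_assoc]
  refine he.mul_mul_mem hX (a := ε * t) (b := s * ε) (fun x hx k => ?_) (fun x hx k => ?_)
    (fun k => ?_) (fun k => ?_) (fun k => ?_) z
  · cases k with
    | zero => rw [mul_assoc, a_zero, mul_zero]
    | succ k => rw [mul_assoc, a_succ, mul_ite, hx, mul_zero, ite_self]
  · rw [mul_assoc, b_eq, mul_ite, hx, mul_zero, ite_self]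
  · rcases k with _ | _ | k
    · rw [mul_assoc, a_zero, mul_zero]
    · rw [mul_assoc, a_succ, if_pos Even.zero, a_zero]
    · rw [mul_assoc, a_succ, mul_ite, mul_zero, a_succ]
      by_cases hk : Even k <;> simp [Nat.even_add_one, hk]
  · rw [mul_assoc, b_eq, mul_ite, b_eq]
    by_cases hk : Even k <;> simp [Nat.even_add_one, hk]
  · rw [sub_mul, one_mul, sub_eq_zero, add_mul, mul_assoc (ε * t), b_eq, mul_ite, a_succ]
    cases k with
    | zero => rw [mul_assoc (s * ε), a_zero]; simp
    | succ k =>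
      rw [mul_assoc (s * ε), a_succ, mul_ite, b_eq]
      by_cases hk : Even k <;> simp [Nat.even_add_one, hk]

end Ring

section PureInjective

open Filter

variable {R}
variable {P Q Z : Type u} [AddCommGroup P] [Module R P] [AddCommGroup Q] [Module R Q]
  [AddCommGroup Z] [Module R Z]

lemma IsPureMono.comp {g : Q →ₗ[R] Z} {f : P →ₗ[R] Q} (hg : IsPureMono R g)
    (hf : IsPureMono R f) : IsPureMono R (g ∘ₗ f) :=
  ⟨hg.1.comp hf.1, fun m n r a h => hf.2 m n r a (hg.2 m n r (f ∘ a) h)⟩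

variable (R) in
/-- The quotient map from the power `Q ^ ι` onto the reduced power of `Q` modulo the filter `l`. -/
def germMk {ι : Type u} (l : Filter ι) : (ι → Q) →ₗ[R] l.Germ Q where
  toFun x := x
  map_add' _ _ := rfl
  map_smul' _ _ := rfl

lemma isPureMono_germMk_comp_pi_id {ι : Type u} (l : Filter ι) [l.NeBot] :
    IsPureMono R (germMk R l ∘ₗ LinearMap.pi fun _ => (LinearMap.id : Q →ₗ[R] Q)) := by
  refine ⟨fun a b h => Germ.const_inj.1 h, ?_⟩
  rintro m n r a ⟨y, hy⟩
  choose z hz using fun j => Quotient.exists_rep (y j)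
  have eventually_solution (i) : ∀ᶠ k in l, (∑ j, r i j • z j) k = a i := by
    have h : germMk R l (∑ j, r i j • z j) = germMk R l fun _ => a i := by
      simp only [map_sum, map_smul, ← hz] at hy ⊢
      exact hy i
    exact Germ.coe_eq.1 h
  obtain ⟨k, hk⟩ := (eventually_all.2 eventually_solution).exists
  exact ⟨fun j => z j k, fun i => by simpa using hk i⟩

lemma IsPureInjective.exists_limit (hQ : IsPureInjective R Q) {ι : Type u} (l : Filter ι)
    [l.NeBot] :
    ∃ c : (ι → Q) →ₗ[R] Q, (∀ x y, x =ᶠ[l] y → c x = c y) ∧ ∀ q, c (fun _ => q) = q := by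
  obtain ⟨c, hc⟩ := hQ _ _ _ (isPureMono_germMk_comp_pi_id l) LinearMap.id
  exact ⟨c ∘ₗ germMk R l, fun x y hxy => congrArg c (Germ.coe_eq.2 hxy), LinearMap.congr_fun hc⟩

/-- The left ideal of the endomorphisms of `Q` that factor through `p`. -/
def factorIdeal (p : Q →ₗ[R] Z) : Ideal (Module.End R Q) where
  carrier := {x | ∃ d : Z →ₗ[R] Q, d ∘ₗ p = x}
  add_mem' := by
    rintro _ _ ⟨d, rfl⟩ ⟨d', rfl⟩
    exact ⟨d + d', LinearMap.add_comp _ _ _⟩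
  zero_mem' := ⟨0, LinearMap.zero_comp _⟩
  smul_mem' := by
    rintro a _ ⟨d, rfl⟩
    exact ⟨a ∘ₗ d, rfl⟩

lemma factorIdeal_end (h : Module.End R Q) : factorIdeal h = Ideal.span {h} :=
  Ideal.ext fun _ => Ideal.mem_span_singleton'.symm

lemma mem_factorIdeal_mkQ_iff {W : Submodule R Q} {x : Module.End R Q} :
    x ∈ factorIdeal W.mkQ ↔ W ≤ LinearMap.ker x := by
  refine ⟨?_, fun h => ⟨W.liftQ x h, W.liftQ_mkQ x h⟩⟩
  rintro ⟨d, rfl⟩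
  exact W.ker_mkQ.symm.le.trans (LinearMap.ker_le_ker_comp _ _)

lemma IsPureInjective.exists_lowerBound_span (hQ : IsPureInjective R Q) {ι : Type u} [Preorder ι]
    [IsDirectedOrder ι] [Nonempty ι] (p : Q →ₗ[R] Z) (h : ι → Module.End R Q)
    (h_anti : Antitone fun i => Ideal.span {h i}) (hp : ∀ i, 1 - h i ∈ factorIdeal p) :
    ∃ k : Module.End R Q, 1 - k ∈ factorIdeal p ∧
      ∀ i, Ideal.span {k} ≤ Ideal.span {h i} := by
  obtain ⟨c, hc_congr, hc_const⟩ := hQ.exists_limit (atTop : Filter ι)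
  choose d hd using hp
  refine ⟨c ∘ₗ LinearMap.pi h, ⟨c ∘ₗ LinearMap.pi d, ?_⟩, fun i => ?_⟩
  · ext q
    calc c (LinearMap.pi d (p q)) = c ((fun _ => q) - LinearMap.pi h q) :=
          congrArg c (funext fun i => by simpa using LinearMap.congr_fun (hd i) q)
      _ = q - c (LinearMap.pi h q) := by rw [map_sub, hc_const]
  · have exists_left_factor (j : ι) : ∃ a, i ≤ j → a * h i = h j := by
      by_cases hij : i ≤ j
      · obtain ⟨a, ha⟩ := Ideal.mem_span_singleton'.1
          (h_anti hij (Ideal.mem_span_singleton_self (h j)))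
        exact ⟨a, fun _ => ha⟩
      · exact ⟨0, fun h => absurd h hij⟩
    choose a ha using exists_left_factor
    rw [Ideal.span_singleton_le_iff_mem, Ideal.mem_span_singleton']
    refine ⟨c ∘ₗ LinearMap.pi a, LinearMap.ext fun q => hc_congr _ _ ?_⟩
    filter_upwards [eventually_ge_atTop i] with j hij
    exact LinearMap.congr_fun (ha j hij) q

lemma IsPureInjective.exists_minimalFor_span (hQ : IsPureInjective R Q) (p : Q →ₗ[R] Z) :
    ∃ h, MinimalFor (fun k : Module.End R Q => 1 - k ∈ factorIdeal p)
      (fun k => Ideal.span {k}) h := by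
  let S : Set (Ideal (Module.End R Q))ᵒᵈ := {I | ∃ k : Module.End R Q,
    1 - k ∈ factorIdeal p ∧ Ideal.span {k} = OrderDual.ofDual I}
  obtain ⟨-, -, ⟨h, hp, rfl⟩, h_max⟩ := zorn_le_nonempty₀ S (fun C hCS hC I hI => by
    have : Nonempty C := ⟨I, hI⟩
    have : IsDirectedOrder C := directedOn_iff_isDirectedOrder.1 hC.directedOn
    choose k hkp hk using fun J : C => hCS J.2
    obtain ⟨k₀, hk₀p, hk₀⟩ := hQ.exists_lowerBound_span p k
      (fun J K hJK => ((hk K).trans_le hJK).trans_eq (hk J).symm) hkp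
    exact ⟨_, ⟨k₀, hk₀p, rfl⟩, fun J hJ => (hk₀ ⟨J, hJ⟩).trans_eq (hk ⟨J, hJ⟩)⟩)
    (OrderDual.toDual (Ideal.span {1})) ⟨1, by simp, rfl⟩
  exact ⟨h, hp, fun k hk hkh => h_max (y := OrderDual.toDual (Ideal.span {k})) ⟨k, hk, rfl⟩ hkh⟩

lemma IsPureInjective.exists_isHullIdempotent (hQ : IsPureInjective R Q) (p : Q →ₗ[R] Z) :
    ∃ e, IsHullIdempotent (factorIdeal p) e := by
  obtain ⟨h, hh⟩ := hQ.exists_minimalFor_span p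
  obtain ⟨j, hj⟩ := hQ.exists_minimalFor_span h
  exact exists_isHullIdempotent_of_minimalFor_span hh (factorIdeal_end h ▸ hj)

lemma orbitAnnihilator_eq_factorIdeal (s κ : Module.End R Q) :
    orbitAnnihilator s κ = factorIdeal (⨆ n : ℕ, LinearMap.range (s ^ n * κ)).mkQ := by
  ext x
  simp only [mem_factorIdeal_mkQ_iff, iSup_le_iff, LinearMap.range_le_ker_iff]
  rfl

lemma IsPureInjective.exists_isHullIdempotent_orbitAnnihilator (hQ : IsPureInjective R Q)
    (s κ : Module.End R Q) : ∃ e, IsHullIdempotent (orbitAnnihilator s κ) e :=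
  orbitAnnihilator_eq_factorIdeal s κ ▸ hQ.exists_isHullIdempotent _

lemma IsPureInjective.nonempty_linearEquiv (hP : IsPureInjective R P) {f : P →ₗ[R] Q}
    {f' : Q →ₗ[R] P} {g : Q →ₗ[R] P} {g' : P →ₗ[R] Q} (hf : f' ∘ₗ f = LinearMap.id)
    (hg : g' ∘ₗ g = LinearMap.id) : Nonempty (P ≃ₗ[R] Q) := by
  let s : Module.End R P := g ∘ₗ f
  let t : Module.End R P := f' ∘ₗ g'
  let γ : Module.End R P := g ∘ₗ g'
  have hf' (x) : f' (f x) = x := LinearMap.congr_fun hf x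
  have hg' (x) : g' (g x) = x := LinearMap.congr_fun hg x
  have hts : t * s = 1 := by ext x; simp [s, t, hf', hg']
  have hγs : γ * s = s := by ext x; simp [s, γ, hg']
  have htγ : t * γ = t := by ext x; simp [t, γ, hg']
  have hγ : IsIdempotentElem γ := by ext x; simp [γ, hg']
  obtain ⟨e, he⟩ := hP.exists_isHullIdempotent_orbitAnnihilator s (1 - γ)
  obtain ⟨u, hu⟩ := he.exists_semiconjBy (he.one_sub_add_mul_mul hts hγs htγ hγ)
  obtain ⟨a, b, hab, hba⟩ :=
    exists_mul_eq_and_mul_eq_one hts hγs htγ hγ he.isIdempotentElem hu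
  refine ⟨.ofLinearMap (g' ∘ₗ a) (b ∘ₗ g) ?_ ?_⟩
  · ext q
    have h : a (b (g q)) = g (g' (g q)) := LinearMap.congr_fun hab (g q)
    simp [h, hg']
  · ext p
    have hγa : γ * a = a := by rw [← hab, mul_assoc, hba, mul_one]
    have h : g (g' (a p)) = a p := LinearMap.congr_fun hγa p
    have h' : b (a p) = p := LinearMap.congr_fun hba p
    simp [h, h']

lemma IsPureInjective.exists_end_limit (hQ : IsPureInjective R Q) (E : ℕ → Module.End R Q) :
    ∃ ε : Module.End R Q, ∀ y z : Module.End R Q, (∀ᶠ n in atTop, E n * y = z) → ε * y = z := by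
  obtain ⟨c, hc_congr, hc_const⟩ := hQ.exists_limit (map ULift.up.{u} (atTop : Filter ℕ))
  refine ⟨c ∘ₗ LinearMap.pi fun n => E n.down, fun y z h => LinearMap.ext fun q => ?_⟩
  refine (hc_congr _ (fun _ => z q) (eventually_map.2 ?_)).trans (hc_const _)
  filter_upwards [h] with n hn using LinearMap.congr_fun hn q

lemma IsPureInjectiveEnvelope.exists_leftInverse {M : Type u} [AddCommGroup M] [Module R M]
    {u : M →ₗ[R] P} (hu : IsPureInjectiveEnvelope R M P u) (hQ : IsPureInjective R Q)
    {w : M →ₗ[R] Q} (hw : IsPureMono R w) :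
    ∃ (F : P →ₗ[R] Q) (F' : Q →ₗ[R] P), F' ∘ₗ F = LinearMap.id ∧ F ∘ₗ u = w := by
  obtain ⟨-, hP, exists_lift, bijective_of_comp_eq⟩ := hu
  obtain ⟨F, hF⟩ := exists_lift Q hQ w
  obtain ⟨G, hG⟩ := hP _ _ w hw u
  have hGF : Function.Bijective (G ∘ₗ F) :=
    bijective_of_comp_eq _ (by rw [LinearMap.comp_assoc, hF, hG])
  let φ := LinearEquiv.ofBijective (G ∘ₗ F) hGF
  exact ⟨F, φ.symm ∘ₗ G, LinearMap.ext fun x => φ.symm_apply_apply x, hF⟩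

end PureInjective

section AutInvariant

variable {R}
variable {P Q : Type u} [AddCommGroup P] [Module R P] [AddCommGroup Q] [Module R Q]

/-- The submodule `M` of `Q` is invariant under all automorphisms of `Q`. -/
def IsAutInvariant (M : Submodule R Q) : Prop :=
  ∀ φ : Q ≃ₗ[R] Q, ∀ x ∈ M, φ x ∈ M

/-- The subring of the endomorphisms of `Q` that map the submodule `M` into itself. -/
def endStabilizer (M : Submodule R Q) : Subring (Module.End R Q) where
  carrier := {a | ∀ x ∈ M, a x ∈ M}
  mul_mem' ha hb x hx := ha _ (hb x hx)
  one_mem' _ hx := hx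
  add_mem' ha hb x hx := add_mem (ha x hx) (hb x hx)
  zero_mem' _ _ := zero_mem M
  neg_mem' ha x hx := neg_mem (ha x hx)

lemma IsAutInvariant.mem_endStabilizer {M : Submodule R Q} (hM : IsAutInvariant M)
    (a : Module.End R Q) (ha : IsUnit a) : a ∈ endStabilizer M := by
  obtain ⟨v, rfl⟩ := ha
  exact hM (LinearMap.GeneralLinearGroup.generalLinearEquiv R Q v)

lemma IsAutInvariant.map {M : Submodule R P} (hM : IsAutInvariant M) (θ : P ≃ₗ[R] Q) :
    IsAutInvariant (M.map (θ : P →ₗ[R] Q)) := by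
  rintro φ _ ⟨x, hx, rfl⟩
  exact ⟨θ.symm (φ (θ x)), hM ((θ.trans φ).trans θ.symm) x hx, by simp⟩

lemma isAutInvariant_range {M : Type u} [AddCommGroup M] [Module R M] {u : M →ₗ[R] P}
    (hu : ∀ φ : P ≃ₗ[R] P, ∃ f : M →ₗ[R] M, u ∘ₗ f = (φ : P →ₗ[R] P) ∘ₗ u) :
    IsAutInvariant (LinearMap.range u) := by
  rintro φ _ ⟨x, rfl⟩
  obtain ⟨f, hf⟩ := hu φ
  exact ⟨f x, LinearMap.congr_fun hf x⟩

lemma IsPureInjective.mul_mul_mem_of_isHullIdempotent (hQ : IsPureInjective R Q)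
    {X : Subring (Module.End R Q)} (hX : ∀ a, IsUnit a → a ∈ X) {s t e : Module.End R Q}
    (hts : t * s = 1) (he : IsHullIdempotent (orbitAnnihilator s (1 - s * t)) e)
    (z : Module.End R Q) : e * z * e ∈ X := by
  obtain ⟨ε, hε⟩ := hQ.exists_end_limit (altSum s t)
  refine he.mul_mul_mem_of_mul_pow_mul hX hts (ε := ε) (fun k => hε _ _ ?_) z
  filter_upwards [Filter.eventually_gt_atTop k] with n hkn using altSum_mul_pow_mul hts hkn

lemma IsPureInjective.exists_linearEquiv_forall_mem (hQ : IsPureInjective R Q)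
    {M N : Submodule R Q} (hM : IsAutInvariant M) (hN : IsAutInvariant N)
    {s t : Module.End R Q} (hts : t * s = 1) (hs : ∀ x ∈ M, s x ∈ N) :
    ∃ θ : Q ≃ₗ[R] Q, ∀ x ∈ M, θ x ∈ N := by
  have hγs : s * t * s = s := by rw [mul_assoc, hts, mul_one]
  have htγ : t * (s * t) = t := by rw [← mul_assoc, hts, one_mul]
  have hγ : IsIdempotentElem (s * t) := by rw [IsIdempotentElem, ← mul_assoc, hγs]
  obtain ⟨e, he⟩ := hQ.exists_isHullIdempotent_orbitAnnihilator s (1 - s * t)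
  obtain ⟨u, hu⟩ := he.exists_semiconjBy (he.one_sub_add_mul_mul hts hγs htγ hγ)
  obtain ⟨θ, hθ⟩ := exists_units_val_eq_mul_one_sub_add_mul hts he.isIdempotentElem hu
  have e_mem_M {x} (hx : x ∈ M) : e x ∈ M := by
    have h := hQ.mul_mul_mem_of_isHullIdempotent hM.mem_endStabilizer hts he 1
    rw [mul_one, he.isIdempotentElem] at h
    exact h x hx
  have e_mem_N {x} (hx : x ∈ M) : e x ∈ N := by
    have hu' : (↑u⁻¹ : Module.End R Q) ∈ endStabilizer N :=
      hN.mem_endStabilizer _ u⁻¹.isUnit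
    have h := hQ.mul_mul_mem_of_isHullIdempotent hN.mem_endStabilizer hts he (t * u)
    rw [← mul_mul_mul_mul_eq_self_of_semiconjBy hts he.isIdempotentElem hu]
    exact h _ (hu' _ (hs _ (e_mem_M hx)))
  refine ⟨LinearMap.GeneralLinearGroup.generalLinearEquiv R Q θ, fun x hx => ?_⟩
  have h : (θ : Module.End R Q) x = s (x - e x) + (u : Module.End R Q) (e x) := by simp [hθ]
  have hu_mem : (u : Module.End R Q) (e x) ∈ N :=
    hN.mem_endStabilizer _ u.isUnit _ (e_mem_N hx)
  exact h ▸ add_mem (hs _ (sub_mem hx (e_mem_M hx))) hu_mem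

lemma IsPureInjective.exists_map_eq (hQ : IsPureInjective R Q)
    {M N : Submodule R Q} (hM : IsAutInvariant M) (hN : IsAutInvariant N)
    {s t s' t' : Module.End R Q} (hts : t * s = 1) (hs : ∀ x ∈ M, s x ∈ N)
    (hts' : t' * s' = 1) (hs' : ∀ x ∈ N, s' x ∈ M) :
    ∃ θ : Q ≃ₗ[R] Q, M.map (θ : Q →ₗ[R] Q) = N := by
  obtain ⟨θ, hθ⟩ := hQ.exists_linearEquiv_forall_mem hM hN hts hs
  obtain ⟨θ', hθ'⟩ := hQ.exists_linearEquiv_forall_mem hN hM hts' hs'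
  refine ⟨θ, le_antisymm (Submodule.map_le_iff_le_comap.2 hθ) fun y hy => ?_⟩
  exact ⟨(θ.trans θ').symm (θ' y), hM _ _ (hθ' y hy), by simp⟩

lemma IsPureInjective.nonempty_linearEquiv_of_isAutInvariant (hP : IsPureInjective R P)
    {M : Submodule R P} {N : Submodule R Q} (hM : IsAutInvariant M) (hN : IsAutInvariant N)
    {F : P →ₗ[R] Q} {F' : Q →ₗ[R] P} {G : Q →ₗ[R] P} {G' : P →ₗ[R] Q}
    (hF : F' ∘ₗ F = LinearMap.id) (hG : G' ∘ₗ G = LinearMap.id)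
    (hFM : ∀ x ∈ M, F x ∈ N) (hGN : ∀ y ∈ N, G y ∈ M) : Nonempty (M ≃ₗ[R] N) := by
  obtain ⟨σ⟩ := hP.nonempty_linearEquiv hF hG
  have hF' (x) : F' (F x) = x := LinearMap.congr_fun hF x
  have hG' (y) : G' (G y) = y := LinearMap.congr_fun hG y
  obtain ⟨θ, hθ⟩ := hP.exists_map_eq hM (hN.map σ.symm)
    (s := σ.symm ∘ₗ F) (t := F' ∘ₗ σ) (s' := G ∘ₗ σ) (t' := σ.symm ∘ₗ G')
    (by ext x; simp [hF']) (fun x hx => Submodule.mem_map_of_mem (hFM x hx))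
    (by ext x; simp [hG']) (by rintro _ ⟨y, hy, rfl⟩; simpa using hGN y hy)
  exact ⟨(θ.submoduleMap M).trans ((LinearEquiv.ofEq _ _ hθ).trans (σ.symm.submoduleMap N).symm)⟩

end AutInvariant

/-- **Corollary 3.2.** If `M` and `N` are invariant under automorphisms of their
pure-injective envelopes and there are pure monomorphisms `f : M → N` and `g : N → M`,
then `M ≅ N`. -/
theorem stmt15 (M N : Type u) [AddCommGroup M] [Module R M] [AddCommGroup N] [Module R N]
    (hM : IsPureAutomorphismInvariant R M) (hN : IsPureAutomorphismInvariant R N)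
    (f : M →ₗ[R] N) (hf : IsPureMono R f)
    (g : N →ₗ[R] M) (hg : IsPureMono R g) :
    Nonempty (M ≃ₗ[R] N) := by
  obtain ⟨P, _, _, u, hu, hu_inv⟩ := hM
  obtain ⟨Q, _, _, v, hv, hv_inv⟩ := hN
  obtain ⟨F, F', hF, hFu⟩ := hu.exists_leftInverse hv.2.1 (hv.1.comp hf)
  obtain ⟨G, G', hG, hGv⟩ := hv.exists_leftInverse hu.2.1 (hu.1.comp hg)
  have hF_range : ∀ x ∈ LinearMap.range u, F x ∈ LinearMap.range v := by
    rintro _ ⟨x, rfl⟩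
    exact ⟨f x, (LinearMap.congr_fun hFu x).symm⟩
  have hG_range : ∀ y ∈ LinearMap.range v, G y ∈ LinearMap.range u := by
    rintro _ ⟨y, rfl⟩
    exact ⟨g y, (LinearMap.congr_fun hGv y).symm⟩
  obtain ⟨σ⟩ := hu.2.1.nonempty_linearEquiv_of_isAutInvariant
    (isAutInvariant_range hu_inv) (isAutInvariant_range hv_inv) hF hG hF_range hG_range
  exact ⟨(LinearEquiv.ofInjective u hu.1.1).trans
    (σ.trans (LinearEquiv.ofInjective v hv.1.1).symm)⟩
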